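/- arXiv:2411.09511 — 5 statements merged into one kernel-verified Lean document; each statement's English description precedes it below -/
import Mathlib

section
/- For all m, n ∈ ℕ with m ≥ 1 and n ≥ 1, the integral over ℝ of the product of derivatives of Hermite functions satisfies ∫_ℝ 𝓗′_m(x)·𝓗′_n(x) dx = π·(√(mn) + √((m+1)(n+1)))·δ_{m,n} − π·√(m(n+1))·δ_{m,n+2} − π·√((m+1)n)·δ_{m,n−2}, where δ_{i,j} equals 1 if i = j and 0 otherwise. -/
open MeasureTheory Real

/-- The Hermite polynomial `H_m(x) = (−1)^m 2^{1/4−m} (m!)^{−1/2} π^{−m/2}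
    exp(2πx²) (d^m/dx^m) exp(−2πx²)`. -/
noncomputable def hermitePoly (m : ℕ) (x : ℝ) : ℝ :=
  (-1 : ℝ) ^ m * (2 : ℝ) ^ ((1 : ℝ) / 4 - (m : ℝ)) * (Nat.factorial m : ℝ) ^ (-(1 : ℝ) / 2)
    * Real.pi ^ (-(m : ℝ) / 2) * Real.exp (2 * Real.pi * x ^ 2)
    * iteratedDeriv m (fun y => Real.exp (-(2 * Real.pi * y ^ 2))) x

/-- The Hermite function `𝓗_m(x) = H_m(x) · exp(−πx²)`. -/
noncomputable def hermiteFun (m : ℕ) (x : ℝ) : ℝ :=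
  hermitePoly m x * Real.exp (-(Real.pi * x ^ 2))

open Polynomial in
noncomputable def hpP : ℕ → Polynomial ℝ
  | 0 => 1
  | (n+1) => C (4 * Real.pi) * X * hpP n - derivative (hpP n)

open Polynomial in
lemma hpP_deriv (n : ℕ) :
    derivative (hpP (n+1)) = C (4 * Real.pi * ((n:ℝ) + 1)) * hpP n := by
  induction n with
  | zero => simp [hpP]
  | succ k ih =>
    have h1 : hpP (k+2) = C (4 * Real.pi) * X * hpP (k+1) - derivative (hpP (k+1)) := rfl
    have h2 : hpP (k+1) = C (4 * Real.pi) * X * hpP k - derivative (hpP k) := rfl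
    rw [h1, derivative_sub, derivative_mul, ih, derivative_C_mul, derivative_C_mul, derivative_X]
    have h3 : derivative (hpP k) = C (4 * Real.pi) * X * hpP k - hpP (k+1) := by rw [h2]; ring
    rw [h3]
    push_cast
    simp only [C_mul, C_add, C_1]
    ring

noncomputable def hpG (x : ℝ) : ℝ := Real.exp (-(2 * Real.pi * x ^ 2))

lemma hpG_hasDerivAt (x : ℝ) : HasDerivAt hpG (-(4 * Real.pi * x) * hpG x) x := by
  unfold hpG
  have h := (((hasDerivAt_id x).pow 2).const_mul (2 * Real.pi)).neg.exp
  simp only [id, Pi.pow_apply, Pi.neg_apply] at h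
  convert h using 1
  push_cast
  ring

lemma hp_hasDerivAt (p : Polynomial ℝ) (x : ℝ) :
    HasDerivAt (fun x => p.eval x * hpG x)
      ((p.derivative - Polynomial.C (4 * Real.pi) * Polynomial.X * p).eval x * hpG x) x := by
  have h := (p.hasDerivAt x).mul (hpG_hasDerivAt x)
  refine h.congr_deriv ?_
  simp only [Polynomial.eval_sub, Polynomial.eval_mul, Polynomial.eval_C, Polynomial.eval_X]
  ring

lemma hp_integrable (p : Polynomial ℝ) : Integrable (fun x => p.eval x * hpG x) := by
  induction p using Polynomial.induction_on' with
  | add p q hp hq => 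
    simp only [Polynomial.eval_add, add_mul]
    exact hp.add hq
  | monomial n a =>
    have hb : 0 < 2 * Real.pi := by positivity
    have h := (integrable_rpow_mul_exp_neg_mul_sq hb (s := (n:ℝ))
      (by have : (0:ℝ) ≤ n := Nat.cast_nonneg n
          linarith)).const_mul a
    refine h.congr (Filter.Eventually.of_forall fun x => ?_)
    simp [hpG, mul_assoc]

noncomputable def hpL (p : Polynomial ℝ) : ℝ := ∫ x, p.eval x * hpG x

lemma hpL_sub (p q : Polynomial ℝ) : hpL (p - q) = hpL p - hpL q := by
  unfold hpL
  rw [← integral_sub (hp_integrable p) (hp_integrable q)]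
  simp [sub_mul]

lemma hpL_C_mul (a : ℝ) (p : Polynomial ℝ) : hpL (Polynomial.C a * p) = a * hpL p := by
  unfold hpL
  rw [← integral_const_mul]
  simp [mul_assoc]

lemma hpL_deriv (p : Polynomial ℝ) :
    hpL (p.derivative - Polynomial.C (4 * Real.pi) * Polynomial.X * p) = 0 :=
  integral_eq_zero_of_hasDerivAt_of_integrable (hp_hasDerivAt p) (hp_integrable _)
    (hp_integrable p)

lemma hpL_step (p : Polynomial ℝ) (n : ℕ) :
    hpL (p * hpP (n+1)) = hpL (p.derivative * hpP n) := by
  have h := hpL_deriv (p * hpP n)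
  have e : Polynomial.derivative (p * hpP n)
      - Polynomial.C (4 * Real.pi) * Polynomial.X * (p * hpP n)
      = p.derivative * hpP n - p * hpP (n+1) := by
    rw [Polynomial.derivative_mul, hpP]; ring
  rw [e, hpL_sub] at h
  linarith

noncomputable def hpc (m : ℕ) : ℝ :=
  (2 : ℝ) ^ ((1 : ℝ) / 4 - (m : ℝ)) * (Nat.factorial m : ℝ) ^ (-(1 : ℝ) / 2)
    * Real.pi ^ (-(m : ℝ) / 2)

lemma hpc_succ (m : ℕ) : hpc m = hpc (m+1) * (2 * √((m:ℝ)+1) * √Real.pi) := by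
  have hpi := Real.pi_pos
  have hm : (0:ℝ) < (m:ℝ) + 1 := by positivity
  unfold hpc
  have e1 : (2:ℝ) ^ ((1 : ℝ) / 4 - (m : ℝ)) = 2 ^ ((1 : ℝ) / 4 - ((m+1:ℕ) : ℝ)) * 2 := by
    nth_rw 3 [← Real.rpow_one 2]
    rw [← Real.rpow_add (by norm_num)]
    congr 1; push_cast; ring
  have e2 : Real.pi ^ (-(m : ℝ) / 2) = Real.pi ^ (-((m+1:ℕ) : ℝ) / 2) * √Real.pi := by
    rw [Real.sqrt_eq_rpow, ← Real.rpow_add hpi]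
    congr 1; push_cast; ring
  have e3 : (Nat.factorial m : ℝ) ^ (-(1 : ℝ) / 2)
      = (Nat.factorial (m+1) : ℝ) ^ (-(1 : ℝ) / 2) * √((m:ℝ)+1) := by
    rw [Nat.factorial_succ, Real.sqrt_eq_rpow]
    push_cast
    rw [Real.mul_rpow hm.le (by positivity), mul_right_comm, ← Real.rpow_add hm]
    norm_num
  rw [e1, e2, e3]; ring

lemma hp_iter (m : ℕ) : iteratedDeriv m (fun y => Real.exp (-(2 * Real.pi * y ^ 2)))
    = fun x => (-1:ℝ)^m * ((hpP m).eval x * hpG x) := by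
  induction m with
  | zero => funext x; simp [hpP, hpG]
  | succ k ih =>
    funext x
    rw [iteratedDeriv_succ, ih, ((hp_hasDerivAt (hpP k) x).const_mul _).deriv, hpP, pow_succ]
    simp
    ring

lemma hermiteFun_eq (m : ℕ) (x : ℝ) :
    hermiteFun m x = hpc m * ((hpP m).eval x * Real.exp (-(Real.pi * x ^ 2))) := by
  have h1 : Real.exp (2 * Real.pi * x ^ 2) * hpG x = 1 := by
    rw [hpG, ← Real.exp_add]; simp
  have h2 : (-1:ℝ)^m * (-1:ℝ)^m = 1 := by rw [← mul_pow]; simp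
  unfold hermiteFun hermitePoly
  rw [hp_iter]
  change _ = ((2 : ℝ) ^ ((1 : ℝ) / 4 - (m : ℝ)) * (Nat.factorial m : ℝ) ^ (-(1 : ℝ) / 2)
    * Real.pi ^ (-(m : ℝ) / 2)) * _
  generalize (2 : ℝ) ^ ((1 : ℝ) / 4 - (m : ℝ)) = A
  generalize (Nat.factorial m : ℝ) ^ (-(1 : ℝ) / 2) = B
  generalize Real.pi ^ (-(m : ℝ) / 2) = D
  calc _ = ((-1:ℝ)^m * (-1:ℝ)^m) * (Real.exp (2 * Real.pi * x ^ 2) * hpG x) *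
        (A * B * D * ((hpP m).eval x * Real.exp (-(Real.pi * x ^ 2)))) := by ring
    _ = _ := by rw [h1, h2]; ring

lemma hermiteFun_mul_eq (m n : ℕ) (x : ℝ) : hermiteFun m x * hermiteFun n x
    = hpc m * hpc n * ((hpP m * hpP n).eval x * hpG x) := by
  have : hpG x = Real.exp (-(Real.pi * x ^ 2)) * Real.exp (-(Real.pi * x ^ 2)) := by
    rw [hpG, ← Real.exp_add]; ring_nf
  rw [hermiteFun_eq, hermiteFun_eq, this, Polynomial.eval_mul]; ring

lemma hp_int (m n : ℕ) : Integrable (fun x => hermiteFun m x * hermiteFun n x) := by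
  simp only [hermiteFun_mul_eq]
  exact (hp_integrable _).const_mul _

lemma hp_orth' (m n : ℕ) : hpc m * hpc n * hpL (hpP m * hpP n) = if m = n then 1 else 0 := by
  induction m generalizing n with
  | zero =>
    cases n with
    | zero =>
      have h := integral_gaussian (2 * Real.pi)
      have e : hpL (hpP 0 * hpP 0) = √(Real.pi / (2 * Real.pi)) := by
        rw [← h]; simp [hpL, hpP, hpG]
      have e2 : Real.pi / (2 * Real.pi) = 2⁻¹ := by
        have := Real.pi_pos
        field_simp
      rw [e, e2, Real.sqrt_inv]
      have e3 : hpc 0 * hpc 0 = √2 := by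
        simp only [hpc, Real.sqrt_eq_rpow]
        simp
        rw [← Real.rpow_add (by norm_num)]; norm_num
      rw [e3]; simp
    | succ n => rw [hpL_step]; simp [hpP, hpL]
  | succ m ih =>
    cases n with
    | zero => rw [mul_comm (hpP _), hpL_step]; simp [hpP, hpL]
    | succ n =>
      have h := ih n
      rw [hpL_step, hpP_deriv, mul_assoc (Polynomial.C _), hpL_C_mul]
      rw [hpc_succ m, hpc_succ n] at h
      have s1 : √((m:ℝ)+1) ≠ 0 := by positivity
      have s2 : √((n:ℝ)+1) ≠ 0 := by positivity
      have s3 : √((m:ℝ)+1) * √((m:ℝ)+1) = m + 1 := Real.mul_self_sqrt (by positivity)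
      have s4 : √Real.pi * √Real.pi = Real.pi := Real.mul_self_sqrt Real.pi_pos.le
      have key : √((n:ℝ)+1) * (hpc (m+1) * hpc (n+1) *
          (4 * Real.pi * ((m:ℝ)+1) * hpL (hpP m * hpP n)))
          = √((m:ℝ)+1) * (if m = n then 1 else 0) := by
        rw [← h]
        linear_combination (-(4 * hpc (m+1) * hpc (n+1) * √((n:ℝ)+1) * hpL (hpP m * hpP n)))
          * (((m:ℝ)+1) * s4 + √Real.pi * √Real.pi * s3)
      by_cases hmn : m = n
      · subst hmn
        simp only [if_true] at key ⊢
        exact mul_left_cancel₀ s1 key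
      · simp only [hmn, if_false, mul_zero] at key
        simpa [hmn, s2] using key

lemma hp_orth (m n : ℕ) : ∫ x, hermiteFun m x * hermiteFun n x = if m = n then 1 else 0 := by
  rw [← hp_orth']
  simp only [hermiteFun_mul_eq]
  rw [integral_const_mul]; rfl

lemma hp_deriv_fun (k : ℕ) (x : ℝ) : deriv (hermiteFun (k+1)) x =
    √Real.pi * (√((k:ℝ)+1) * hermiteFun k x - √((k:ℝ)+1+1) * hermiteFun (k+2) x) := by
  have hG : HasDerivAt (fun x => Real.exp (-(Real.pi * x ^ 2)))
      (-(2 * Real.pi * x) * Real.exp (-(Real.pi * x ^ 2))) x := by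
    have h := (((hasDerivAt_id x).pow 2).const_mul (Real.pi)).neg.exp
    simp only [id, Pi.pow_apply, Pi.neg_apply] at h
    convert h using 1
    push_cast
    ring
  have h := (((hpP (k+1)).hasDerivAt x).mul hG).const_mul (hpc (k+1))
  have e : hermiteFun (k+1)
      = fun x => hpc (k+1) * ((hpP (k+1)).eval x * Real.exp (-(Real.pi * x ^ 2))) :=
    funext (hermiteFun_eq (k+1))
  have h2 := h.deriv
  have h3 : deriv (hermiteFun (k+1)) x = hpc (k + 1) *
      (Polynomial.eval x (Polynomial.derivative (hpP (k + 1))) * rexp (-(π * x ^ 2)) +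
        Polynomial.eval x (hpP (k + 1)) * (-(2 * π * x) * rexp (-(π * x ^ 2)))) := by
    rw [e]; exact h2
  rw [h3, hermiteFun_eq, hermiteFun_eq]
  have r : hpP (k+2) = Polynomial.C (4 * Real.pi) * Polynomial.X * hpP (k+1)
    - (hpP (k+1)).derivative := rfl
  rw [r, hpP_deriv, hpc_succ k]
  have c2 := hpc_succ (k+1)
  push_cast at c2
  have s3 : √((k:ℝ)+1) * √((k:ℝ)+1) = k + 1 := Real.mul_self_sqrt (by positivity)
  have s4 : √Real.pi * √Real.pi = Real.pi := Real.mul_self_sqrt Real.pi_pos.le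
  simp only [Polynomial.eval_sub, Polynomial.eval_mul, Polynomial.eval_C, Polynomial.eval_X]
  generalize Real.exp (-(Real.pi * x ^ 2)) = E
  generalize (hpP (k+1)).eval x = P1
  generalize (hpP k).eval x = P0
  generalize hpc (k+1+1) = d at *
  generalize hpc (k+1) = c at *
  have t1 : √Real.pi * (√((k:ℝ)+1) * (c * (2 * √((k:ℝ)+1) * √Real.pi) * (P0 * E)))
      = c * 2 * Real.pi * (k+1) * (P0 * E) := by
    linear_combination (2 * c * P0 * E) * (((k:ℝ)+1) * s4 + √Real.pi * √Real.pi * s3)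
  have t2 : √Real.pi * √((k:ℝ)+1+1) * d = c / 2 := by rw [c2]; ring
  rw [mul_sub, t1]
  linear_combination ((4 * Real.pi * x * P1 - 4 * Real.pi * (k+1) * P0) * E) * t2

/-- For `m, n ≥ 1`:
`∫ 𝓗′_m 𝓗′_n = π(√(mn) + √((m+1)(n+1)))δ_{m,n} − π√(m(n+1))δ_{m,n+2} − π√((m+1)n)δ_{m,n−2}`. -/
theorem integral_deriv_hermiteFun_mul (m n : ℕ) (hm : 1 ≤ m) (hn : 1 ≤ n) :
    ∫ x : ℝ, deriv (hermiteFun m) x * deriv (hermiteFun n) x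
      = Real.pi * (Real.sqrt ((m : ℝ) * (n : ℝ)) + Real.sqrt (((m : ℝ) + 1) * ((n : ℝ) + 1)))
          * (if m = n then (1 : ℝ) else 0)
        - Real.pi * Real.sqrt ((m : ℝ) * ((n : ℝ) + 1)) * (if m = n + 2 then (1 : ℝ) else 0)
        - Real.pi * Real.sqrt (((m : ℝ) + 1) * (n : ℝ)) * (if n = m + 2 then (1 : ℝ) else 0) := by
  obtain ⟨a, rfl⟩ : ∃ a, m = a + 1 := ⟨m - 1, by omega⟩
  obtain ⟨b, rfl⟩ : ∃ b, n = b + 1 := ⟨n - 1, by omega⟩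
  have s4 : √Real.pi * √Real.pi = Real.pi := Real.mul_self_sqrt Real.pi_pos.le
  have e : ∀ x, deriv (hermiteFun (a+1)) x * deriv (hermiteFun (b+1)) x =
      Real.pi * (√((a:ℝ)+1) * √((b:ℝ)+1)) * (hermiteFun a x * hermiteFun b x)
      + Real.pi * (√((a:ℝ)+1+1) * √((b:ℝ)+1+1)) * (hermiteFun (a+2) x * hermiteFun (b+2) x)
      - Real.pi * (√((a:ℝ)+1) * √((b:ℝ)+1+1)) * (hermiteFun a x * hermiteFun (b+2) x)
      - Real.pi * (√((a:ℝ)+1+1) * √((b:ℝ)+1)) * (hermiteFun (a+2) x * hermiteFun b x) := by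
    intro x
    rw [hp_deriv_fun, hp_deriv_fun]
    generalize √Real.pi = q at *
    rw [← s4]; ring
  simp only [e]
  have i1 := (hp_int a b).const_mul (Real.pi * (√((a:ℝ)+1) * √((b:ℝ)+1)))
  have i2 := (hp_int (a+2) (b+2)).const_mul (Real.pi * (√((a:ℝ)+1+1) * √((b:ℝ)+1+1)))
  have i3 := (hp_int a (b+2)).const_mul (Real.pi * (√((a:ℝ)+1) * √((b:ℝ)+1+1)))
  have i4 := (hp_int (a+2) b).const_mul (Real.pi * (√((a:ℝ)+1+1) * √((b:ℝ)+1)))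
  rw [integral_sub (by exact (i1.add i2).sub i3) i4, integral_sub (by exact i1.add i2) i3,
    integral_add i1 i2]
  simp only [integral_const_mul, hp_orth]
  push_cast
  simp only [Real.sqrt_mul (show (0:ℝ) ≤ (a:ℝ)+1 by positivity),
    Real.sqrt_mul (show (0:ℝ) ≤ (a:ℝ)+1+1 by positivity)]
  split_ifs <;> first | omega | ring
end

section
/- For all m, n ∈ ℕ with m ≥ 1 and n ≥ 1, the integral over ℝ of the product of derivatives of Hermite functions satisfies ∫_ℝ 𝓗′_m(x)·𝓗′_n(x) dx = π(2m+1)·δ_{m,n} − π·√(m(m−1))·δ_{m,n+2} − π·√((m+1)(m+2))·δ_{m,n−2}, where δ_{i,j} equals 1 if i = j and 0 otherwise. -/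
open MeasureTheory Real

open Polynomial in
noncomputable def hP : ℕ → Polynomial ℝ
  | 0 => 1
  | (m+1) => C (4 * π) * X * hP m - derivative (hP m)

open Polynomial in
lemma hP_deriv (m : ℕ) : derivative (hP (m+1)) = C (4 * π * (m+1)) * hP m := by
  induction m with
  | zero => simp [hP]
  | succ k ih =>
    have h : hP (k+2) = C (4 * π) * X * hP (k+1) - derivative (hP (k+1)) := rfl
    have h1 : hP (k+1) = C (4 * π) * X * hP k - derivative (hP k) := rfl
    have h2 : derivative (hP (k+2)) = C (4 * π) * hP (k+1) + C (4 * π) * X * derivative (hP (k+1))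
        - derivative (derivative (hP (k+1))) := by
      rw [h]; simp
    rw [h2, ih]
    simp only [derivative_C_mul]
    have h3 : derivative (hP k) = C (4 * π) * X * hP k - hP (k+1) := by rw [h1]; ring
    rw [h3]
    simp only [map_mul, map_add, Nat.cast_succ, map_one]
    ring

lemma hasDerivAt_gauss (b x : ℝ) (p : Polynomial ℝ) :
    HasDerivAt (fun y : ℝ => p.eval y * Real.exp (-(b * y ^ 2)))
      ((p.derivative.eval x - 2 * b * x * p.eval x) * Real.exp (-(b * x ^ 2))) x := by
  have h1 := p.hasDerivAt x
  have h2 : HasDerivAt (fun y : ℝ => -(b * y ^ 2)) (-(b * (2 * x))) x := by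
    have h3 : HasDerivAt (fun y : ℝ => -(b * y ^ 2)) _ x :=
      ((hasDerivAt_pow 2 x).const_mul b).neg
    refine h3.congr_deriv ?_
    simp
  have h4 : HasDerivAt (fun y : ℝ => p.eval y * Real.exp (-(b * y ^ 2))) _ x := h1.mul h2.exp
  refine h4.congr_deriv ?_
  ring

lemma iterD (m : ℕ) : iteratedDeriv m (fun y => Real.exp (-(2 * Real.pi * y ^ 2)))
    = fun x => (-1) ^ m * ((hP m).eval x * Real.exp (-(2 * π * x ^ 2))) := by
  induction m with
  | zero => ext x; simp [hP]
  | succ k ih =>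
    rw [iteratedDeriv_succ, ih]
    ext x
    rw [((hasDerivAt_gauss (2 * π) x (hP k)).const_mul _).deriv]
    simp only [hP, Polynomial.eval_sub, Polynomial.eval_mul, Polynomial.eval_C, Polynomial.eval_X]
    ring

lemma integrable_gauss (p : Polynomial ℝ) :
    Integrable (fun x : ℝ => p.eval x * Real.exp (-(2 * π * x ^ 2))) := by
  induction p using Polynomial.induction_on' with
  | add p q hp hq => 
    simp only [Polynomial.eval_add, add_mul]
    exact hp.add hq
  | monomial n a =>
    have h := integrable_rpow_mul_exp_neg_mul_sq (b := 2 * π) (by positivity) (s := n)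
      (by have : (0:ℝ) ≤ n := Nat.cast_nonneg n
          linarith)
    have h2 := h.const_mul a
    simp only [Real.rpow_natCast] at h2
    convert h2 using 2 with x
    rw [Polynomial.eval_monomial]
    ring_nf

noncomputable def hJ (p : Polynomial ℝ) : ℝ := ∫ x : ℝ, p.eval x * Real.exp (-(2 * π * x ^ 2))

lemma hJ_add (p q : Polynomial ℝ) : hJ (p + q) = hJ p + hJ q := by
  unfold hJ
  rw [← integral_add (integrable_gauss p) (integrable_gauss q)]
  simp only [Polynomial.eval_add, add_mul]

lemma hJ_C (a : ℝ) (p : Polynomial ℝ) : hJ (Polynomial.C a * p) = a * hJ p := by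
  unfold hJ
  rw [← integral_const_mul]
  simp only [Polynomial.eval_mul, Polynomial.eval_C, mul_assoc]

open Polynomial in
lemma hJ_zero (p : Polynomial ℝ) : hJ (derivative p - C (4 * π) * X * p) = 0 := by
  have h : ∀ x : ℝ, HasDerivAt (fun y : ℝ => p.eval y * Real.exp (-(2 * π * y ^ 2)))
      ((derivative p - C (4 * π) * X * p).eval x * Real.exp (-(2 * π * x ^ 2))) x := by
    intro x
    refine (hasDerivAt_gauss (2 * π) x p).congr_deriv ?_
    simp only [eval_sub, eval_mul, eval_C, eval_X]
    ring
  exact integral_eq_zero_of_hasDerivAt_of_integrable h (integrable_gauss _) (integrable_gauss p)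

open Polynomial in
lemma hJ_step (m : ℕ) (q : Polynomial ℝ) : hJ (hP (m+1) * q) = hJ (hP m * derivative q) := by
  have h := hJ_zero (hP m * q)
  have e : hP m * derivative q = hP (m+1) * q
      + (derivative (hP m * q) - C (4 * π) * X * (hP m * q)) := by
    simp only [hP, derivative_mul]; ring
  rw [e, hJ_add, h, add_zero]

lemma hJ_succ (m n : ℕ) :
    hJ (hP (m+1) * hP (n+1)) = 4 * π * (n+1) * hJ (hP m * hP n) := by
  rw [hJ_step, hP_deriv, ← hJ_C]; congr 1; ring

lemma hJ_main (m n : ℕ) : hJ (hP m * hP n)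
    = if m = n then (4 * π) ^ m * (m.factorial : ℝ) / √2 else 0 := by
  induction m generalizing n with
  | zero =>
    cases n with
    | zero =>
      simp only [hP, hJ]
      have := integral_gaussian (2 * π)
      simp only [neg_mul] at this
      simp [this]
      have : π / (2 * π) = 2⁻¹ := by field_simp
      rw [this]; simp
    | succ n => rw [mul_comm, hJ_step]; simp [hP, hJ]
  | succ m ih =>
    cases n with
    | zero => rw [hJ_step]; simp [hP, hJ]
    | succ n =>
      rw [hJ_succ, ih]
      by_cases h : m = n
      · subst h; simp [Nat.factorial_succ, pow_succ]; ring
      · simp [h]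

noncomputable def hc (m : ℕ) : ℝ :=
  (2 : ℝ) ^ ((1 : ℝ) / 4 - (m : ℝ)) * (Nat.factorial m : ℝ) ^ (-(1 : ℝ) / 2)
    * Real.pi ^ (-(m : ℝ) / 2)

lemma hc_succ (m : ℕ) : hc m = hc (m+1) * (2 * √π * √(m+1)) := by
  unfold hc
  have e1 : (2:ℝ) ^ ((1 : ℝ) / 4 - (m : ℝ)) = (2:ℝ) ^ ((1 : ℝ) / 4 - ((m+1 : ℕ) : ℝ)) * 2 := by
    rw [← Real.rpow_add_one (by norm_num)]; congr 1; push_cast; ring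
  have e2 : π ^ (-(m : ℝ) / 2) = π ^ (-((m+1 : ℕ) : ℝ) / 2) * √π := by
    rw [Real.sqrt_eq_rpow, ← Real.rpow_add Real.pi_pos]; congr 1; push_cast; ring
  have e3 : (Nat.factorial m : ℝ) ^ (-(1 : ℝ) / 2)
      = (Nat.factorial (m+1) : ℝ) ^ (-(1 : ℝ) / 2) * √(m+1) := by
    have hp : (0:ℝ) < (m:ℝ) + 1 := by positivity
    rw [Nat.factorial_succ, Nat.cast_mul, Real.mul_rpow (by positivity) (by positivity),
      Real.sqrt_eq_rpow]
    push_cast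
    rw [mul_right_comm, ← Real.rpow_add hp]
    norm_num
  rw [e1, e2, e3]; ring

lemma hc_sq (m : ℕ) : hc m ^ 2 * ((4 * π) ^ m * (m.factorial : ℝ) / √2) = 1 := by
  induction m with
  | zero =>
    have : hc 0 ^ 2 = √2 := by
      simp [hc]
      rw [← Real.rpow_natCast, ← Real.rpow_mul (by norm_num), Real.sqrt_eq_rpow]; norm_num
    rw [this]; simp
  | succ k ih =>
    rw [hc_succ] at ih
    have e : (hc (k + 1) * (2 * √π * √((k:ℝ) + 1))) ^ 2
        = hc (k + 1) ^ 2 * (4 * √π ^ 2 * √((k:ℝ) + 1) ^ 2) := by ring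
    rw [← ih, Nat.factorial_succ, e, Real.sq_sqrt Real.pi_pos.le,
      Real.sq_sqrt (by positivity)]
    push_cast
    ring

lemma hFun (m : ℕ) : hermiteFun m = fun x => hc m * ((hP m).eval x * Real.exp (-(π * x ^ 2))) := by
  ext x
  unfold hermiteFun hermitePoly
  rw [iterD]
  have h1 : Real.exp (2 * π * x ^ 2) * Real.exp (-(2 * π * x ^ 2)) = 1 := by
    rw [← Real.exp_add]; simp
  have h2 : ((-1 : ℝ) ^ m) * (-1) ^ m = 1 := by rw [← mul_pow]; simp
  simp only [hc]
  linear_combination ((2 : ℝ) ^ ((1 : ℝ) / 4 - (m : ℝ)) * (Nat.factorial m : ℝ) ^ (-(1 : ℝ) / 2)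
    * Real.pi ^ (-(m : ℝ) / 2) * (hP m).eval x * Real.exp (-(π * x ^ 2))) *
    ((-1 : ℝ) ^ m * (-1) ^ m * h1 + h2)

open Polynomial in
lemma hFun_deriv (m : ℕ) (x : ℝ) : deriv (hermiteFun (m+1)) x
    = hc (m+1) / 2 * ((C (4 * π * (m+1)) * hP m + C (-1) * hP (m+2)).eval x
      * Real.exp (-(π * x ^ 2))) := by
  rw [hFun, ((hasDerivAt_gauss π x (hP (m+1))).const_mul _).deriv]
  have h : hP (m+2) = C (4 * π) * X * hP (m+1) - derivative (hP (m+1)) := rfl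
  rw [h, hP_deriv]
  simp only [eval_add, eval_sub, eval_mul, eval_C, eval_X]
  ring

open Polynomial in
lemma hmain (m n : ℕ) : ∫ x : ℝ, deriv (hermiteFun (m+1)) x * deriv (hermiteFun (n+1)) x
    = hc (m+1) * hc (n+1) / 4 * (4 * π * (m+1) * (4 * π * (n+1)) * hJ (hP m * hP n)
      - 4 * π * (m+1) * hJ (hP m * hP (n+2)) - 4 * π * (n+1) * hJ (hP (m+2) * hP n)
      + hJ (hP (m+2) * hP (n+2))) := by
  have e : ∀ x : ℝ, deriv (hermiteFun (m+1)) x * deriv (hermiteFun (n+1)) x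
      = (C (hc (m+1) * hc (n+1) / 4) * (C (4 * π * (m+1) * (4 * π * (n+1))) * (hP m * hP n)
      + C (-(4 * π * (m+1))) * (hP m * hP (n+2)) + C (-(4 * π * (n+1))) * (hP (m+2) * hP n)
      + hP (m+2) * hP (n+2))).eval x * Real.exp (-(2 * π * x ^ 2)) := by
    intro x
    rw [hFun_deriv, hFun_deriv]
    have : Real.exp (-(2 * π * x ^ 2)) = Real.exp (-(π * x ^ 2)) * Real.exp (-(π * x ^ 2)) := by
      rw [← Real.exp_add]; congr 1; ring
    rw [this]
    simp only [eval_add, eval_mul, eval_C]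
    ring
  simp only [e]
  change hJ _ = _
  rw [hJ_C, hJ_add, hJ_add, hJ_add, hJ_C, hJ_C, hJ_C]
  ring

lemma hoff (n : ℕ) : hc (n+1) * hc (n+3) * ((4 * π) ^ (n+3) * ((n+3).factorial : ℝ) / √2)
    = 4 * π * √(((n:ℝ)+2) * (n+3)) := by
  have h1 := hc_succ (n+1)
  have h2 := hc_succ (n+2)
  have h3 := hc_sq (n+3)
  have h4 := Real.mul_self_sqrt Real.pi_pos.le
  rw [h2] at h1
  push_cast at h1
  rw [Real.sqrt_mul (by positivity), h1]
  have e1 : (n:ℝ)+1+1 = n+2 := by ring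
  have e2 : (n:ℝ)+2+1 = n+3 := by ring
  rw [e1, e2]
  linear_combination (4 * √π * √π * √((n:ℝ)+2) * √((n:ℝ)+3)) * h3
    + 4 * √((n:ℝ)+2) * √((n:ℝ)+3) * h4

/-- For `m, n ≥ 1`:
`∫ 𝓗′_m 𝓗′_n = π(2m+1)δ_{m,n} − π√(m(m−1))δ_{m,n+2} − π√((m+1)(m+2))δ_{m,n−2}`. -/
theorem integral_deriv_hermiteFun_mul' (m n : ℕ) (hm : 1 ≤ m) (hn : 1 ≤ n) :
    ∫ x : ℝ, deriv (hermiteFun m) x * deriv (hermiteFun n) x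
      = Real.pi * (2 * (m : ℝ) + 1) * (if m = n then (1 : ℝ) else 0)
        - Real.pi * Real.sqrt ((m : ℝ) * ((m : ℝ) - 1)) * (if m = n + 2 then (1 : ℝ) else 0)
        - Real.pi * Real.sqrt (((m : ℝ) + 1) * ((m : ℝ) + 2))
            * (if n = m + 2 then (1 : ℝ) else 0) := by
  obtain ⟨m, rfl⟩ : ∃ k, m = k + 1 := ⟨m - 1, by omega⟩
  obtain ⟨n, rfl⟩ : ∃ k, n = k + 1 := ⟨n - 1, by omega⟩
  rw [hmain]
  simp only [hJ_main]
  by_cases h1 : m = n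
  · subst h1
    have h := hc_sq (m+1)
    simp [Nat.factorial_succ, pow_succ] at h ⊢
    linear_combination (π * (2 * m + 3)) * h
  by_cases h2 : m = n + 2
  · subst h2
    have h := hoff n
    have e : √(((n + 2 + 1 : ℕ) : ℝ) * (((n + 2 + 1 : ℕ) : ℝ) - 1)) = √(((n:ℝ)+2) * (n+3)) := by
      congr 1; push_cast; ring
    rw [e]
    have h7 : ¬ (n + 2 + 2 = n) := by omega
    simp [h7, Nat.factorial_succ, pow_succ] at h ⊢
    linear_combination (1 / 4) * h
  by_cases h3 : n = m + 2
  · subst h3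
    have h := hoff m
    have e : √((((m + 1 : ℕ) : ℝ) + 1) * (((m + 1 : ℕ) : ℝ) + 2)) = √(((m:ℝ)+2) * (m+3)) := by
      congr 1; push_cast; ring
    rw [e]
    simp [h2, Nat.factorial_succ, pow_succ] at h ⊢
    linear_combination (1 / 4) * h
  have h4 : ¬ (m + 2 = n) := fun h => h3 h.symm
  have h5 : ¬ (m + 1 = n + 1 + 2) := by omega
  have h6 : ¬ (n + 1 = m + 1 + 2) := by omega
  simp [h1, h2, h3, h4]
end

section
/- For every m ∈ ℕ with m ≥ 1, the integral over ℝ satisfies ∫_ℝ 𝓗′_m(x)·𝓗′_0(x) dx = −π·√2 · δ_{m,2}, where δ_{m,2} equals 1 if m = 2 and 0 otherwise. -/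
open MeasureTheory Real

namespace HermAux
open Polynomial

noncomputable def T (p : ℝ[X]) : ℝ[X] := derivative p - C (4 * π) * X * p

noncomputable def P : ℕ → ℝ[X]
  | 0 => 1
  | n + 1 => T (P n)

noncomputable def G (x : ℝ) : ℝ := Real.exp (-(2 * Real.pi * x ^ 2))

noncomputable def I (p : ℝ[X]) : ℝ := ∫ x : ℝ, p.eval x * G x

lemma hasDerivAt_G (x : ℝ) : HasDerivAt G (-(4 * π * x) * G x) x := by
  unfold G
  have h : HasDerivAt (fun x : ℝ => -(2 * π * x ^ 2)) (-(2 * π * (2 * x))) x := by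
    simpa using ((hasDerivAt_pow 2 x).const_mul (2 * π)).fun_neg
  convert h.exp using 1
  ring

lemma hasDerivAt_PG (p : ℝ[X]) (x : ℝ) :
    HasDerivAt (fun x => p.eval x * G x) ((T p).eval x * G x) x := by
  refine ((p.hasDerivAt x).fun_mul (hasDerivAt_G x)).congr_deriv ?_
  simp [T]
  ring

lemma integrable_PG (p : ℝ[X]) : Integrable (fun x => p.eval x * G x) := by
  induction p using Polynomial.induction_on' with
  | add p q hp hq =>
    simp only [eval_add, add_mul]
    exact hp.add hq
  | monomial n a =>
    have h := (integrable_rpow_mul_exp_neg_mul_sq (b := 2 * π) (by positivity)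
      (s := (n : ℝ)) (by have : (0 : ℝ) ≤ n := by positivity
                         linarith)).const_mul a
    refine h.congr (Filter.Eventually.of_forall fun x => ?_)
    simp [G, mul_assoc]

lemma I_T (p : ℝ[X]) : I (T p) = 0 :=
  integral_eq_zero_of_hasDerivAt_of_integrable (hasDerivAt_PG p) (integrable_PG _) (integrable_PG p)

lemma I_add (p q : ℝ[X]) : I (p + q) = I p + I q := by
  unfold I
  rw [← integral_add (integrable_PG p) (integrable_PG q)]
  simp [add_mul]

lemma I_C_mul (a : ℝ) (p : ℝ[X]) : I (C a * p) = a * I p := by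
  unfold I
  rw [← integral_const_mul]
  simp [mul_assoc]

lemma I_parts (q p : ℝ[X]) : I (q * T p) = - I (derivative q * p) := by
  have h : T (q * p) = q * T p + derivative q * p := by
    simp only [T, derivative_mul]
    ring
  have := I_T (q * p)
  rw [h, I_add] at this
  linarith

lemma I_one : I 1 = Real.sqrt (1 / 2) := by
  have := integral_gaussian (2 * π)
  simp only [I, G, eval_one, one_mul]
  simp only [← neg_mul] at *
  rw [this]
  congr 1
  field_simp

lemma iter (m : ℕ) : iteratedDeriv m G = fun x => (P m).eval x * G x := by
  induction m with
  | zero => simp [P]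
  | succ n ih =>
    rw [iteratedDeriv_succ, ih]
    ext x
    exact (hasDerivAt_PG (P n) x).deriv

noncomputable def c (m : ℕ) : ℝ := (-1 : ℝ) ^ m * (2 : ℝ) ^ ((1 : ℝ) / 4 - (m : ℝ))
    * (Nat.factorial m : ℝ) ^ (-(1 : ℝ) / 2) * Real.pi ^ (-(m : ℝ) / 2)

noncomputable def g (x : ℝ) : ℝ := Real.exp (-(Real.pi * x ^ 2))

lemma g_sq (x : ℝ) : g x * g x = G x := by
  rw [g, G, ← Real.exp_add]
  ring_nf

lemma hasDerivAt_g (x : ℝ) : HasDerivAt g (-(2 * π * x) * g x) x := by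
  unfold g
  have h : HasDerivAt (fun x : ℝ => -(π * x ^ 2)) (-(π * (2 * x))) x := by
    simpa using ((hasDerivAt_pow 2 x).const_mul π).fun_neg
  convert h.exp using 1
  ring

lemma fun_eq (m : ℕ) : hermiteFun m = fun x => c m * ((P m).eval x * g x) := by
  ext x
  have h := congrFun (iter m) x
  have e : Real.exp (2 * π * x ^ 2) * G x = 1 := by
    rw [G, ← Real.exp_add]; simp
  unfold hermiteFun hermitePoly
  change _ * iteratedDeriv m G x * g x = _
  rw [h]
  unfold c
  linear_combination ((-1 : ℝ) ^ m * (2 : ℝ) ^ ((1 : ℝ) / 4 - (m : ℝ))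
    * (Nat.factorial m : ℝ) ^ (-(1 : ℝ) / 2) * Real.pi ^ (-(m : ℝ) / 2)
    * (P m).eval x * g x) * e

lemma deriv_fun (m : ℕ) (x : ℝ) : deriv (hermiteFun m) x
    = c m * ((derivative (P m) - C (2 * π) * X * P m).eval x * g x) := by
  rw [fun_eq]
  refine HasDerivAt.deriv ?_
  refine ((((P m).hasDerivAt x).fun_mul (hasDerivAt_g x)).const_mul (c m)).congr_deriv ?_
  simp only [eval_sub, eval_mul, eval_C, eval_X]
  ring

lemma main (m : ℕ) : ∫ x : ℝ, deriv (hermiteFun m) x * deriv (hermiteFun 0) x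
    = c m * c 0 * (-(2 * π) * I (X * T (P m)) + -(4 * π ^ 2) * I (X ^ 2 * P m)) := by
  rw [← I_C_mul, ← I_C_mul, ← I_add, ← I_C_mul]
  unfold I
  congr 1
  ext x
  rw [deriv_fun, deriv_fun, ← g_sq]
  simp [T, P]
  ring

lemma I_P_succ (n : ℕ) : I (P (n + 1)) = 0 := I_T _

lemma I_X_P_succ (n : ℕ) : I (X * P (n + 1)) = - I (P n) := by
  rw [P, I_parts]; simp

lemma I_X2_P_succ (n : ℕ) : I (X ^ 2 * P (n + 1)) = - (2 * I (X * P n)) := by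
  have e : derivative (X ^ 2 : ℝ[X]) * P n = C 2 * (X * P n) := by
    rw [derivative_X_pow]; simp [mul_assoc]
  rw [P, I_parts, e, I_C_mul]

lemma I_X : I X = 0 := by
  have h := I_T 1
  have e : T 1 = C (-(4 * π)) * X := by simp [T]
  rw [e, I_C_mul] at h
  have := Real.pi_pos
  rcases mul_eq_zero.1 h with h | h
  · linarith
  · exact h

lemma c_two : c 2 * c 0 = 1 / (4 * π) := by
  have e1 : (2 : ℝ) ^ ((1 : ℝ) / 4 - 2) * 2 ^ (-(1 : ℝ) / 2) * 2 ^ ((1 : ℝ) / 4) = 1 / 4 := by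
    rw [← Real.rpow_add (by norm_num), ← Real.rpow_add (by norm_num)]
    have : (1 : ℝ) / 4 - 2 + -1 / 2 + 1 / 4 = -(2 : ℕ) := by norm_num
    rw [this, Real.rpow_neg (by norm_num), Real.rpow_natCast]
    norm_num
  have e2 : π ^ (-(2 : ℝ) / 2) = π⁻¹ := by
    rw [show -(2 : ℝ) / 2 = -1 by norm_num, Real.rpow_neg_one]
  simp only [c, Nat.factorial, Nat.cast_ofNat, Nat.cast_zero]
  rw [e2]
  norm_num at e1 ⊢
  linear_combination π⁻¹ * e1

end HermAux

/-- For `m ≥ 1`: `∫ 𝓗′_m 𝓗′_0 = −π√2·δ_{m,2}`. -/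
theorem integral_deriv_hermiteFun_mul_zero (m : ℕ) (hm : 1 ≤ m) :
    ∫ x : ℝ, deriv (hermiteFun m) x * deriv (hermiteFun 0) x
      = -(Real.pi * Real.sqrt 2) * (if m = 2 then (1 : ℝ) else 0) := by
  rw [HermAux.main]
  obtain ⟨n, rfl⟩ : ∃ n, m = n + 1 := ⟨m - 1, by omega⟩
  have h1 := HermAux.I_X_P_succ (n + 1)
  rw [HermAux.P] at h1
  rw [h1, HermAux.I_P_succ, HermAux.I_X2_P_succ]
  rcases n with _ | _ | n
  · simp [HermAux.P, HermAux.I_X]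
  · rw [HermAux.I_X_P_succ, HermAux.c_two, HermAux.P, HermAux.I_one]
    have hs : Real.sqrt (1 / 2) = Real.sqrt 2 / 2 := by
      rw [Real.sqrt_eq_iff_mul_self_eq (by norm_num) (by positivity)]
      have := Real.mul_self_sqrt (show (0 : ℝ) ≤ 2 by norm_num)
      linarith
    rw [hs]
    have := Real.pi_ne_zero
    simp
    field_simp
    try ring
  · rw [HermAux.I_X_P_succ, HermAux.I_P_succ]
    simp
end

section
/- Let (Ω, ℱ, ℙ) be a probability space, n ≥ 1, 0 ≤ t < T < ∞, and for each x ∈ ℝⁿ let X_x : Ω × [t,T] → ℝⁿ be jointly measurable with s ↦ X_x(ω,s) continuous for every ω ∈ Ω. For bounded continuous φ, c, f : ℝⁿ → ℝ define u[φ,c,f](x) := E[ φ(X_x(T)) · exp(∫_t^T c(X_x(s)) ds) ] − E[ ∫_t^T f(X_x(s)) · exp(∫_t^s c(X_x(r)) dr) ds ]. If φ_k, c_k, f_k (k ∈ ℕ) are bounded continuous functions on ℝⁿ converging uniformly on ℝⁿ to φ, c, f respectively, then sup_{x∈ℝⁿ} | u[φ_k,c_k,f_k](x) − u[φ,c,f](x)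 | → 0 as k → ∞. -/
open MeasureTheory Filter

/-- The Feynman–Kac-type solution functional
`u[φ,c,f](x) = E[φ(X_x(T)) exp(∫_t^T c(X_x(s))ds)]
  − E[∫_t^T f(X_x(s)) exp(∫_t^s c(X_x(r))dr) ds]`. -/
noncomputable def feynmanKac {n : ℕ} {Ω : Type*} [MeasurableSpace Ω] (μ : Measure Ω)
    (X : EuclideanSpace ℝ (Fin n) → Ω → ℝ → EuclideanSpace ℝ (Fin n)) (t T : ℝ)
    (φ c f : EuclideanSpace ℝ (Fin n) → ℝ) (x : EuclideanSpace ℝ (Fin n)) : ℝ :=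
  (∫ ω, φ (X x ω T) * Real.exp (∫ s in t..T, c (X x ω s)) ∂μ)
    - ∫ ω, (∫ s in t..T, f (X x ω s) * Real.exp (∫ r in t..s, c (X x ω r))) ∂μ

theorem fk_meas {Ω : Type*} [MeasurableSpace Ω] (t : ℝ) (g : Ω → ℝ → ℝ)
    (hg : Measurable (Function.uncurry g)) :
    Measurable (fun p : Ω × ℝ => ∫ r in t..p.2, g p.1 r) := by
  have h : (fun p : Ω × ℝ => ∫ r in t..p.2, g p.1 r)
      = fun p : Ω × ℝ => (p.2 - t) * ∫ u in Set.Ioc (0:ℝ) 1, g p.1 (t + (p.2 - t) * u) := by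
    funext p
    have := intervalIntegral.smul_integral_comp_add_mul (a := 0) (b := 1) (g p.1) (p.2 - t) t
    rw [← intervalIntegral.integral_of_le zero_le_one, ← smul_eq_mul, this]
    simp
  rw [h]
  refine (measurable_snd.sub_const t).mul ?_
  have h2 : Measurable (fun q : (Ω × ℝ) × ℝ => g q.1.1 (t + (q.1.2 - t) * q.2)) :=
    hg.comp (f := fun q : (Ω × ℝ) × ℝ => (q.1.1, t + (q.1.2 - t) * q.2)) (by fun_prop)
  exact (h2.stronglyMeasurable.integral_prod_right'
    (ν := volume.restrict (Set.Ioc (0:ℝ) 1))).measurable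

theorem fk_int (g : ℝ → ℝ) (hg : Measurable g) (M a b : ℝ) (hM : ∀ s ∈ Set.uIoc a b, |g s| ≤ M) :
    IntervalIntegrable g volume a b := by
  rw [intervalIntegrable_iff]
  have : IsFiniteMeasure (volume.restrict (Set.uIoc a b)) :=
    ⟨by rw [Measure.restrict_apply_univ, Set.uIoc]; exact measure_Ioc_lt_top⟩
  refine Integrable.of_bound (C := M) hg.aestronglyMeasurable ?_
  exact (ae_restrict_iff' measurableSet_uIoc).2 (Eventually.of_forall hM)

theorem fk_expdiff (a b R : ℝ) (ha : a ≤ R) (hb : b ≤ R) :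
    |Real.exp a - Real.exp b| ≤ Real.exp R * |a - b| := by
  have key : ∀ a b : ℝ, a ≤ R → b ≤ a → |Real.exp a - Real.exp b| ≤ Real.exp R * |a - b| := by
    intro a b ha hba
    rw [abs_of_nonneg (sub_nonneg.2 (Real.exp_le_exp.2 hba)), abs_of_nonneg (sub_nonneg.2 hba)]
    have h1 : Real.exp b = Real.exp a * Real.exp (b - a) := by rw [← Real.exp_add]; ring_nf
    have h2 := Real.add_one_le_exp (b - a)
    have h3 := Real.exp_le_exp.2 ha
    have h4 := Real.exp_pos a
    calc Real.exp a - Real.exp b = Real.exp a * (1 - Real.exp (b - a)) := by rw [h1]; ring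
      _ ≤ Real.exp a * (a - b) := mul_le_mul_of_nonneg_left (by linarith) h4.le
      _ ≤ Real.exp R * (a - b) := mul_le_mul_of_nonneg_right h3 (by linarith)
  rcases le_total b a with h | h
  · exact key a b ha h
  · rw [abs_sub_comm, abs_sub_comm a b]; exact key b a hb h

theorem fk_bound (t T : ℝ) (g : ℝ → ℝ) (M : ℝ) (hM0 : 0 ≤ M) (hM : ∀ z, |g z| ≤ M)
    (s : ℝ) (hs : s ∈ Set.Icc t T) : |∫ r in t..s, g r| ≤ M * (T - t) := by
  have := intervalIntegral.norm_integral_le_of_norm_le_const (a := t) (b := s) (f := g) (C := M)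
    (fun x _ => hM x)
  rw [Real.norm_eq_abs, abs_of_nonneg (by linarith [hs.1] : 0 ≤ s - t)] at this
  exact this.trans (by gcongr; exact hs.2)

theorem fk_pt (t T : ℝ) (c c' : ℝ → ℝ) (hc : Measurable c) (hc' : Measurable c') (M δ p p' : ℝ)
    (hM0 : 0 ≤ M) (hδ0 : 0 ≤ δ) (hδ1 : δ ≤ 1) (hcM : ∀ z, |c z| ≤ M)
    (hcc : ∀ z, |c' z - c z| ≤ δ) (hp : |p| ≤ M) (hpp : |p' - p| ≤ δ)
    (s : ℝ) (hs : s ∈ Set.Icc t T) :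
    |p' * Real.exp (∫ r in t..s, c' r) - p * Real.exp (∫ r in t..s, c r)|
      ≤ δ * (Real.exp ((M + 1) * (T - t)) * (1 + M * (T - t))) := by
  have hL : 0 ≤ T - t := by linarith [hs.1, hs.2]
  have hc'M : ∀ z, |c' z| ≤ M + 1 := fun z => by
    have h1 := abs_add_le (c' z - c z) (c z)
    rw [sub_add_cancel] at h1
    linarith [hcM z, hcc z]
  have ha := (le_abs_self _).trans (fk_bound t T c' (M + 1) (by linarith) hc'M s hs)
  have hb := (le_abs_self _).trans (fk_bound t T c (M + 1) (by linarith)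
    (fun z => (hcM z).trans (by linarith)) s hs)
  have hd := fk_bound t T (fun z => c' z - c z) δ hδ0 hcc s hs
  rw [intervalIntegral.integral_sub (fk_int _ hc' (M + 1) _ _ fun z _ => hc'M z)
    (fk_int _ hc M _ _ fun z _ => hcM z)] at hd
  have he := fk_expdiff _ _ _ ha hb
  set a := ∫ r in t..s, c' r
  set b := ∫ r in t..s, c r
  set K := Real.exp ((M + 1) * (T - t))
  have hK : 0 ≤ K := (Real.exp_pos _).le
  calc |p' * Real.exp a - p * Real.exp b|
      = |(p' - p) * Real.exp a + p * (Real.exp a - Real.exp b)| := by ring_nf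
    _ ≤ |p' - p| * Real.exp a + |p| * |Real.exp a - Real.exp b| := by
        refine (abs_add_le _ _).trans ?_
        rw [abs_mul, abs_mul, Real.abs_exp]
    _ ≤ δ * K + M * (K * (δ * (T - t))) := by
        have h1 : Real.exp a ≤ K := Real.exp_le_exp.2 ha
        have h2 : |Real.exp a - Real.exp b| ≤ K * (δ * (T - t)) := he.trans (by gcongr)
        gcongr
    _ = _ := by ring

theorem fk_ptbd (t T : ℝ) (c : ℝ → ℝ) (M p : ℝ)
    (hM0 : 0 ≤ M) (hcM : ∀ z, |c z| ≤ M) (hp : |p| ≤ M) (s : ℝ) (hs : s ∈ Set.Icc t T) :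
    |p * Real.exp (∫ r in t..s, c r)| ≤ M * Real.exp (M * (T - t)) := by
  rw [abs_mul, Real.abs_exp]
  have := Real.exp_le_exp.2 ((le_abs_self _).trans (fk_bound t T c M hM0 hcM s hs))
  gcongr

/-- integrability of both terms -/
theorem fk_integrable {Ω : Type*} [MeasurableSpace Ω] (μ : Measure Ω) [IsProbabilityMeasure μ]
    (t T : ℝ) (htT : t < T) (c f : Ω → ℝ → ℝ)
    (hc : Measurable (Function.uncurry c)) (hf : Measurable (Function.uncurry f)) (M : ℝ)
    (hM0 : 0 ≤ M) (hcM : ∀ ω z, |c ω z| ≤ M) (hfM : ∀ ω z, |f ω z| ≤ M) :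
    Integrable (fun ω => f ω T * Real.exp (∫ s in t..T, c ω s)) μ ∧
    (∀ ω, IntervalIntegrable (fun s => f ω s * Real.exp (∫ r in t..s, c ω r)) volume t T) ∧
    Integrable (fun ω => ∫ s in t..T, f ω s * Real.exp (∫ r in t..s, c ω r)) μ := by
  have hm : Measurable (fun p : Ω × ℝ => f p.1 p.2 * Real.exp (∫ r in t..p.2, c p.1 r)) :=
    Measurable.mul hf (Real.measurable_exp.comp (fk_meas t c hc))
  have hb : ∀ ω, ∀ s ∈ Set.Icc t T, |f ω s * Real.exp (∫ r in t..s, c ω r)|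
      ≤ M * Real.exp (M * (T - t)) := fun ω s hs =>
    fk_ptbd t T (c ω) M (f ω s) hM0 (hcM ω) (hfM ω s) s hs
  have hb' : ∀ ω, ∀ s ∈ Set.uIoc t T, |f ω s * Real.exp (∫ r in t..s, c ω r)|
      ≤ M * Real.exp (M * (T - t)) := fun ω s hs => by
    rw [Set.uIoc_of_le htT.le] at hs
    exact hb ω s ⟨hs.1.le, hs.2⟩
  refine ⟨?_, ?_, ?_⟩
  · refine Integrable.of_bound (C := M * Real.exp (M * (T - t))) ?_
      (Eventually.of_forall fun ω => hb ω T ⟨htT.le, le_rfl⟩)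
    exact (hm.comp (measurable_id.prodMk measurable_const)).aestronglyMeasurable
  · intro ω
    exact fk_int _ (hm.comp (measurable_const.prodMk measurable_id)) _ _ _ (hb' ω)
  · refine Integrable.of_bound (C := M * Real.exp (M * (T - t)) * |T - t|) ?_
      (Eventually.of_forall fun ω =>
        intervalIntegral.norm_integral_le_of_norm_le_const (hb' ω))
    have := fk_meas t (fun ω s => f ω s * Real.exp (∫ r in t..s, c ω r)) hm
    exact (this.comp (measurable_id.prodMk measurable_const)).aestronglyMeasurable

theorem fk_absint {Ω : Type*} [MeasurableSpace Ω] (μ : Measure Ω) [IsProbabilityMeasure μ]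
    (F G : Ω → ℝ) (hF : Integrable F μ) (hG : Integrable G μ) (C : ℝ)
    (h : ∀ ω, |F ω - G ω| ≤ C) : |(∫ ω, F ω ∂μ) - ∫ ω, G ω ∂μ| ≤ C := by
  rw [← integral_sub hF hG]
  have := norm_integral_le_of_norm_le_const (μ := μ) (f := fun ω => F ω - G ω) (C := C)
    (Eventually.of_forall h)
  simpa using this

/-- If `φ_k → φ`, `c_k → c`, `f_k → f` uniformly on `ℝⁿ` (all bounded continuous), then
`sup_{x∈ℝⁿ} |u[φ_k,c_k,f_k](x) − u[φ,c,f](x)| → 0`. -/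
theorem feynmanKac_tendstoUniformly
    (n : ℕ) (hn : 1 ≤ n) (Ω : Type*) [MeasurableSpace Ω] (μ : Measure Ω)
    [IsProbabilityMeasure μ] (t T : ℝ) (ht : 0 ≤ t) (htT : t < T)
    (X : EuclideanSpace ℝ (Fin n) → Ω → ℝ → EuclideanSpace ℝ (Fin n))
    (hXmeas : ∀ x, Measurable (Function.uncurry (X x)))
    (hXcont : ∀ x ω, ContinuousOn (X x ω) (Set.Icc t T))
    (φ c f : EuclideanSpace ℝ (Fin n) → ℝ)
    (φs cs fs : ℕ → EuclideanSpace ℝ (Fin n) → ℝ)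
    (hφ : Continuous φ) (hφb : ∃ M : ℝ, ∀ z, |φ z| ≤ M)
    (hc : Continuous c) (hcb : ∃ M : ℝ, ∀ z, |c z| ≤ M)
    (hf : Continuous f) (hfb : ∃ M : ℝ, ∀ z, |f z| ≤ M)
    (hφs : ∀ k, Continuous (φs k)) (hφsb : ∀ k, ∃ M : ℝ, ∀ z, |φs k z| ≤ M)
    (hcs : ∀ k, Continuous (cs k)) (hcsb : ∀ k, ∃ M : ℝ, ∀ z, |cs k z| ≤ M)
    (hfs : ∀ k, Continuous (fs k)) (hfsb : ∀ k, ∃ M : ℝ, ∀ z, |fs k z| ≤ M)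
    (hφconv : TendstoUniformly φs φ atTop)
    (hcconv : TendstoUniformly cs c atTop)
    (hfconv : TendstoUniformly fs f atTop) :
    TendstoUniformly (fun k x => feynmanKac μ X t T (φs k) (cs k) (fs k) x)
      (feynmanKac μ X t T φ c f) atTop := by
  obtain ⟨M1, h1⟩ := hφb
  obtain ⟨M2, h2⟩ := hcb
  obtain ⟨M3, h3⟩ := hfb
  obtain ⟨M, hM0, hφM, hcM, hfM⟩ : ∃ M : ℝ, 0 ≤ M ∧ (∀ z, |φ z| ≤ M) ∧ (∀ z, |c z| ≤ M) ∧
      (∀ z, |f z| ≤ M) := by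
    have e1 := (abs_nonneg _).trans (h1 0)
    have e2 := (abs_nonneg _).trans (h2 0)
    have e3 := (abs_nonneg _).trans (h3 0)
    exact ⟨M1 + M2 + M3, by linarith, fun z => by linarith [h1 z], fun z => by linarith [h2 z],
      fun z => by linarith [h3 z]⟩
  have hL : 0 < T - t := sub_pos.2 htT
  set C := Real.exp ((M + 1) * (T - t)) * (1 + M * (T - t)) with hC
  have hC0 : 0 < C := by positivity
  rw [Metric.tendstoUniformly_iff] at hφconv hcconv hfconv ⊢
  intro ε hε
  obtain ⟨δ, hδ0, hδ1, hδε⟩ : ∃ δ : ℝ, 0 < δ ∧ δ ≤ 1 ∧ δ * (C * (1 + (T - t))) < ε := by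
    have hD : 0 < C * (1 + (T - t)) := by positivity
    refine ⟨min 1 (ε / (2 * (C * (1 + (T - t))))), by positivity, min_le_left _ _, ?_⟩
    calc _ ≤ ε / (2 * (C * (1 + (T - t)))) * (C * (1 + (T - t))) := by
          gcongr; exact min_le_right _ _
      _ = ε / 2 := by field_simp
      _ < ε := by linarith
  filter_upwards [hφconv δ hδ0, hcconv δ hδ0, hfconv δ hδ0] with k kφ kc kf x
  have kφ' : ∀ z, |φs k z - φ z| ≤ δ := fun z => by
    have := kφ z; rw [dist_comm, Real.dist_eq] at this; exact this.le
  have kc' : ∀ z, |cs k z - c z| ≤ δ := fun z => by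
    have := kc z; rw [dist_comm, Real.dist_eq] at this; exact this.le
  have kf' : ∀ z, |fs k z - f z| ≤ δ := fun z => by
    have := kf z; rw [dist_comm, Real.dist_eq] at this; exact this.le
  have bd : ∀ g g' : EuclideanSpace ℝ (Fin n) → ℝ, (∀ z, |g z| ≤ M) → (∀ z, |g' z - g z| ≤ δ) →
      ∀ z, |g' z| ≤ M + 1 := fun g g' hg hgg z => by
    have h1 := abs_add_le (g' z - g z) (g z)
    rw [sub_add_cancel] at h1
    linarith [hg z, hgg z]
  have mm : ∀ g : EuclideanSpace ℝ (Fin n) → ℝ, Continuous g →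
      Measurable (Function.uncurry fun ω s => g (X x ω s)) := fun g hg =>
    hg.measurable.comp (hXmeas x)
  have ms : ∀ (g : EuclideanSpace ℝ (Fin n) → ℝ) (ω : Ω), Continuous g →
      Measurable (fun s => g (X x ω s)) := fun g ω hg =>
    (mm g hg).comp (measurable_const.prodMk measurable_id)
  have I1 := fk_integrable μ t T htT _ _ (mm c hc) (mm φ hφ) M hM0
    (fun _ _ => hcM _) (fun _ _ => hφM _)
  have I2 := fk_integrable μ t T htT _ _ (mm c hc) (mm f hf) M hM0
    (fun _ _ => hcM _) (fun _ _ => hfM _)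
  have J1 := fk_integrable μ t T htT _ _ (mm _ (hcs k)) (mm _ (hφs k)) (M + 1) (by linarith)
    (fun _ _ => bd _ _ hcM kc' _) (fun _ _ => bd _ _ hφM kφ' _)
  have J2 := fk_integrable μ t T htT _ _ (mm _ (hcs k)) (mm _ (hfs k)) (M + 1) (by linarith)
    (fun _ _ => bd _ _ hcM kc' _) (fun _ _ => bd _ _ hfM kf' _)
  have A := fk_absint μ _ _ J1.1 I1.1 (δ * C) (fun ω =>
    fk_pt t T _ _ (ms c ω hc) (ms _ ω (hcs k)) M δ _ _ hM0 hδ0.le hδ1 (fun _ => hcM _)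
      (fun _ => kc' _) (hφM _) (kφ' _) T ⟨htT.le, le_rfl⟩)
  have B := fk_absint μ _ _ J2.2.2 I2.2.2 (δ * C * (T - t)) (fun ω => by
    rw [← intervalIntegral.integral_sub (J2.2.1 ω) (I2.2.1 ω)]
    rw [← abs_of_pos hL, ← Real.norm_eq_abs (intervalIntegral _ _ _ _)]
    refine intervalIntegral.norm_integral_le_of_norm_le_const fun s hs => ?_
    rw [Set.uIoc_of_le htT.le] at hs
    exact fk_pt t T _ _ (ms c ω hc) (ms _ ω (hcs k)) M δ _ _ hM0 hδ0.le hδ1 (fun _ => hcM _)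
      (fun _ => kc' _) (hfM _) (kf' _) s ⟨hs.1.le, hs.2⟩)
  rw [dist_comm, Real.dist_eq]
  unfold feynmanKac
  refine lt_of_le_of_lt ?_ hδε
  rw [sub_sub_sub_comm]
  refine (abs_sub _ _).trans ((add_le_add A B).trans (le_of_eq ?_))
  ring
end

section
/- Let (Ω, ℱ, ℙ) be a probability space, n ≥ 1, 0 ≤ t < T < ∞, 0 < λ ≤ 1, and for each x ∈ ℝⁿ let X_x : Ω × [t,T] → ℝⁿ be jointly measurable with continuous sample paths. Let φ, c, f : ℝⁿ → ℝ be bounded and λ-Hölder continuous, with ‖φ‖_∞ ≤ M_φ, ‖c‖_∞ ≤ M_c, ‖f‖_∞ ≤ M_f and Hölder constants K_φ, K_c, K_f (i.e., |φ(z)−φ(w)| ≤ K_φ|z−w|^λ for all z,w, and similarly for c and f). Fix R > 0 and C_R > 0 and assume that for all x, y with |x| ≤ R and |y| ≤ R, the random variable ω ↦ sup_{t≤s≤T} |X_x(ω,s) − X_y(ω,s)|² is integrable with E[ sup_{t≤s≤T} |X_x(s) − X_y(s)|² ] ≤ C_R |x−y|². Define u(x) := E[ φ(X_x(T)) · exp(∫_t^T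 c(X_x(s)) ds) ] − E[ ∫_t^T f(X_x(s)) · exp(∫_t^s c(X_x(r)) dr) ds ]. Then for all x, y with |x| ≤ R, |y| ≤ R: |u(x) − u(y)| ≤ Γ·|x−y|^λ, where Γ = e^{(T−t)M_c} · C_R^{λ/2} · ( K_φ + M_φ·K_c·(T−t) + K_f·(T−t) + M_f·K_c·(T−t)²/2 ). -/
open MeasureTheory Filter

theorem fk_exp_diff (I J B : ℝ) (hI : I ≤ B) (hJ : J ≤ B) :
    |Real.exp I - Real.exp J| ≤ Real.exp B * |I - J| := by
  have key : ∀ I J : ℝ, J ≤ B → I ≤ J → |Real.exp I - Real.exp J| ≤ Real.exp B * |I - J| := by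
    intro I J hJ h
    rw [abs_of_nonpos (sub_nonpos.2 (Real.exp_le_exp.2 h)), abs_of_nonpos (sub_nonpos.2 h)]
    have h1 : Real.exp I = Real.exp J * Real.exp (I - J) := by
      rw [← Real.exp_add]; congr 1; ring
    have h2 := Real.add_one_le_exp (I - J)
    have h3 : Real.exp J * (-(I - J)) ≤ Real.exp B * (-(I - J)) :=
      mul_le_mul_of_nonneg_right (Real.exp_le_exp.2 hJ) (by linarith)
    have h4 := mul_le_mul_of_nonneg_left h2 (Real.exp_pos J).le
    nlinarith
  rcases le_total I J with h | h
  · exact key I J hJ h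
  · rw [abs_sub_comm, abs_sub_comm I J]; exact key J I hI h

theorem fk_intervalIntegrable (a : ℝ → ℝ) (M : ℝ) (ha : Measurable a) (hb : ∀ s, |a s| ≤ M)
    (u v : ℝ) : IntervalIntegrable a volume u v := by
  refine (intervalIntegrable_const (c := M)).mono_fun ha.aestronglyMeasurable ?_
  refine Eventually.of_forall fun s => ?_
  simpa using (hb s).trans (le_abs_self M)

theorem fk_path (a b : ℝ → ℝ) (Mc L t T s p q P M : ℝ) (ha : Measurable a) (hb : Measurable b)
    (hab : ∀ s, |a s| ≤ Mc) (hbb : ∀ s, |b s| ≤ Mc)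
    (hL : ∀ r ∈ Set.Icc t T, |a r - b r| ≤ L) (hts : t ≤ s) (hsT : s ≤ T)
    (hpq : |p - q| ≤ P) (hq : |q| ≤ M) :
    |p * Real.exp (∫ r in t..s, a r) - q * Real.exp (∫ r in t..s, b r)|
      ≤ Real.exp ((T - t) * Mc) * (P + M * L * (s - t)) := by
  have hMc : 0 ≤ Mc := (abs_nonneg _).trans (hab 0)
  have bound : ∀ a : ℝ → ℝ, (∀ s, |a s| ≤ Mc) → (∫ r in t..s, a r) ≤ (T - t) * Mc := by
    intro a ha
    have := intervalIntegral.norm_integral_le_of_norm_le_const (a := t) (b := s) (f := a) (C := Mc)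
      (fun x _ => ha x)
    rw [abs_of_nonneg (by linarith : 0 ≤ s - t)] at this
    have h2 : Mc * (s - t) ≤ Mc * (T - t) := mul_le_mul_of_nonneg_left (by linarith) hMc
    have := le_abs_self (∫ r in t..s, a r)
    rw [Real.norm_eq_abs] at *
    linarith
  have hIJ : |(∫ r in t..s, a r) - ∫ r in t..s, b r| ≤ L * (s - t) := by
    rw [← intervalIntegral.integral_sub (fk_intervalIntegrable a Mc ha hab t s)
      (fk_intervalIntegrable b Mc hb hbb t s)]
    have := intervalIntegral.norm_integral_le_of_norm_le_const (a := t) (b := s)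
      (f := fun r => a r - b r) (C := L)
      (fun x hx => by
        rw [Set.uIoc_of_le hts] at hx
        exact hL x ⟨hx.1.le, hx.2.trans hsT⟩)
    rwa [abs_of_nonneg (by linarith : 0 ≤ s - t)] at this
  have hI := bound a hab
  have hJ := bound b hbb
  generalize (∫ r in t..s, a r) = I at *
  generalize (∫ r in t..s, b r) = J at *
  have h1 := fk_exp_diff I J _ hI hJ
  have hM : 0 ≤ M := (abs_nonneg _).trans hq
  have hP : 0 ≤ P := (abs_nonneg _).trans hpq
  have e : p * Real.exp I - q * Real.exp J
      = (p - q) * Real.exp I + q * (Real.exp I - Real.exp J) := by ring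
  calc _ = |(p - q) * Real.exp I + q * (Real.exp I - Real.exp J)| := by rw [e]
    _ ≤ |p - q| * Real.exp I + |q| * |Real.exp I - Real.exp J| := by
      refine (abs_add_le _ _).trans ?_
      rw [abs_mul, abs_mul, abs_of_pos (Real.exp_pos I)]
    _ ≤ P * Real.exp ((T - t) * Mc) + M * (Real.exp ((T - t) * Mc) * (L * (s - t))) := by
      gcongr
      exact h1.trans (by gcongr)
    _ = _ := by ring

theorem fk_path_int (a b g h : ℝ → ℝ) (Mc L t T P M : ℝ) (ha : Measurable a) (hb : Measurable b)
    (hab : ∀ s, |a s| ≤ Mc) (hbb : ∀ s, |b s| ≤ Mc)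
    (hL : ∀ r ∈ Set.Icc t T, |a r - b r| ≤ L) (htT : t ≤ T)
    (hgh : ∀ r ∈ Set.Icc t T, |g r - h r| ≤ P) (hq : ∀ r, |h r| ≤ M)
    (hgi : IntervalIntegrable (fun s => g s * Real.exp (∫ r in t..s, a r)) volume t T)
    (hhi : IntervalIntegrable (fun s => h s * Real.exp (∫ r in t..s, b r)) volume t T) :
    |(∫ s in t..T, g s * Real.exp (∫ r in t..s, a r))
      - ∫ s in t..T, h s * Real.exp (∫ r in t..s, b r)|
      ≤ Real.exp ((T - t) * Mc) * (P * (T - t) + M * L * (T - t) ^ 2 / 2) := by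
  rw [← intervalIntegral.integral_sub hgi hhi]
  have h1 := intervalIntegral.norm_integral_le_of_norm_le (μ := volume) (a := t) (b := T)
    (f := fun s => g s * Real.exp (∫ r in t..s, a r) - h s * Real.exp (∫ r in t..s, b r))
    (g := fun s => Real.exp ((T - t) * Mc) * (P + M * L * (s - t))) htT
    (Eventually.of_forall fun s hs => fk_path a b Mc L t T s _ _ P M ha hb hab hbb hL hs.1.le hs.2
      (hgh s ⟨hs.1.le, hs.2⟩) (hq s)) (Continuous.intervalIntegrable (by fun_prop) _ _)
  refine h1.trans (le_of_eq ?_)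
  have h2 : ∀ s ∈ Set.uIcc t T, HasDerivAt
      (fun s => Real.exp ((T - t) * Mc) * (P * (s - t) + M * L * (s - t) ^ 2 / 2))
      (Real.exp ((T - t) * Mc) * (P + M * L * (s - t))) s := by
    intro s _
    have h0 : HasDerivAt (fun s : ℝ => s - t) 1 s := (hasDerivAt_id s).sub_const t
    refine HasDerivAt.congr_deriv (((h0.const_mul P).add
      (((h0.pow 2).const_mul (M * L)).div_const 2)).const_mul (Real.exp ((T - t) * Mc))) ?_
    push_cast; ring
  rw [intervalIntegral.integral_eq_sub_of_hasDerivAt h2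
    (Continuous.intervalIntegrable (by fun_prop) _ _)]
  ring

theorem fk_cont {E : Type*} [NormedAddCommGroup E] (g : E → ℝ) (K lam : ℝ) (hlam : 0 < lam)
    (hg : ∀ z w, |g z - g w| ≤ K * ‖z - w‖ ^ lam) : Continuous g := by
  refine continuous_iff_continuousAt.2 fun w => ?_
  refine tendsto_iff_dist_tendsto_zero.2 ?_
  refine squeeze_zero (fun _ => dist_nonneg) (fun z => hg z w) ?_
  have : Continuous fun z : E => K * ‖z - w‖ ^ lam := by
    refine continuous_const.mul ?_
    exact (by fun_prop : Continuous fun z : E => ‖z - w‖).rpow_const (fun _ => Or.inr hlam.le)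
  have h := this.tendsto w
  simpa [Real.zero_rpow hlam.ne'] using h

theorem fk_meas_s12 {Ω : Type*} [MeasurableSpace Ω] (a : Ω → ℝ → ℝ)
    (ha : Measurable (Function.uncurry a)) (M : ℝ) (hM : ∀ ω s, |a ω s| ≤ M) (t : ℝ) :
    Measurable (Function.uncurry fun ω s => ∫ r in t..s, a ω r) := by
  have hs : ∀ s, Measurable fun ω => ∫ r in t..s, a ω r := by
    intro s
    simp only [intervalIntegral]
    exact (StronglyMeasurable.integral_prod_right
      (f := a) ha.stronglyMeasurable).measurable.sub (StronglyMeasurable.integral_prod_right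
      (f := a) ha.stronglyMeasurable).measurable
  have hc : ∀ ω, Continuous fun s => ∫ r in t..s, a ω r := fun ω =>
    intervalIntegral.continuous_primitive (fun u v => fk_intervalIntegrable (a ω) M
      (ha.comp measurable_prodMk_left) (hM ω) u v) t
  have := measurable_uncurry_of_continuous_of_measurable
    (u := fun s ω => ∫ r in t..s, a ω r) hc hs
  exact this.comp measurable_swap

theorem fk_bound_s12 (Mc Mf t T s : ℝ) (a : ℝ → ℝ) (p : ℝ) (ha : ∀ s, |a s| ≤ Mc) (hp : |p| ≤ Mf)
    (hts : t ≤ s) (hsT : s ≤ T) :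
    |p * Real.exp (∫ r in t..s, a r)| ≤ Mf * Real.exp ((T - t) * Mc) := by
  have hMc : 0 ≤ Mc := (abs_nonneg _).trans (ha 0)
  have := intervalIntegral.norm_integral_le_of_norm_le_const (a := t) (b := s) (f := a) (C := Mc)
      (fun x _ => ha x)
  rw [abs_of_nonneg (by linarith : 0 ≤ s - t)] at this
  have h2 : Mc * (s - t) ≤ Mc * (T - t) := mul_le_mul_of_nonneg_left (by linarith) hMc
  have := le_abs_self (∫ r in t..s, a r)
  rw [Real.norm_eq_abs] at *
  rw [abs_mul, abs_of_pos (Real.exp_pos _)]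
  have hMf : 0 ≤ Mf := (abs_nonneg _).trans hp
  gcongr
  linarith

theorem fk_jensen {Ω : Type*} [MeasurableSpace Ω] (μ : Measure Ω) [IsProbabilityMeasure μ]
    (S : Ω → ℝ) (hS : Integrable S μ) (hS0 : ∀ ω, 0 ≤ S ω) (p : ℝ) (hp : 0 < p) (hp1 : p ≤ 1) :
    Integrable (fun ω => S ω ^ p) μ ∧ ∫ ω, S ω ^ p ∂μ ≤ (∫ ω, S ω ∂μ) ^ p := by
  have hi : Integrable (fun ω => S ω ^ p) μ := by
    refine ((integrable_const (1 : ℝ)).add hS).mono'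
      (hS.aestronglyMeasurable.aemeasurable.pow_const p).aestronglyMeasurable ?_
    refine Eventually.of_forall fun ω => ?_
    rw [Real.norm_eq_abs, abs_of_nonneg (Real.rpow_nonneg (hS0 ω) p)]
    rcases le_total (S ω) 1 with h | h
    · have := Real.rpow_le_one (hS0 ω) h hp.le
      have := hS0 ω
      simp only [Pi.add_apply]; linarith
    · have := Real.rpow_le_rpow_of_exponent_le h hp1
      rw [Real.rpow_one] at this
      simp only [Pi.add_apply]; linarith
  refine ⟨hi, ?_⟩
  exact (Real.concaveOn_rpow hp.le hp1).le_map_integral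
    (Real.continuous_rpow_const hp.le).continuousOn isClosed_Ici
    (Eventually.of_forall fun ω => hS0 ω) hS hi


/-- Hölder continuity in space of the Feynman–Kac solution: with bounded λ-Hölder data
`φ, c, f` and the stability estimate `E[sup_{t≤s≤T}|X_x(s)−X_y(s)|²] ≤ C_R|x−y|²` on the
ball of radius `R`, one has `|u(x)−u(y)| ≤ Γ|x−y|^λ` with
`Γ = e^{(T−t)M_c} C_R^{λ/2} (K_φ + M_φ K_c (T−t) + K_f (T−t) + M_f K_c (T−t)²/2)`. -/
theorem feynmanKac_holder
    (n : ℕ) (hn : 1 ≤ n) (Ω : Type*) [MeasurableSpace Ω] (μ : Measure Ω)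
    [IsProbabilityMeasure μ] (t T : ℝ) (ht : 0 ≤ t) (htT : t < T)
    (lam : ℝ) (hlam : 0 < lam) (hlam1 : lam ≤ 1)
    (X : EuclideanSpace ℝ (Fin n) → Ω → ℝ → EuclideanSpace ℝ (Fin n))
    (hXmeas : ∀ x, Measurable (Function.uncurry (X x)))
    (hXcont : ∀ x ω, ContinuousOn (X x ω) (Set.Icc t T))
    (φ c f : EuclideanSpace ℝ (Fin n) → ℝ)
    (Mφ Mc Mf Kφ Kc Kf : ℝ)
    (hφb : ∀ z, |φ z| ≤ Mφ) (hcb : ∀ z, |c z| ≤ Mc) (hfb : ∀ z, |f z| ≤ Mf)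
    (hφH : ∀ z w, |φ z - φ w| ≤ Kφ * ‖z - w‖ ^ lam)
    (hcH : ∀ z w, |c z - c w| ≤ Kc * ‖z - w‖ ^ lam)
    (hfH : ∀ z w, |f z - f w| ≤ Kf * ‖z - w‖ ^ lam)
    (R C_R : ℝ) (hR : 0 < R) (hCR : 0 < C_R)
    (hint : ∀ x y : EuclideanSpace ℝ (Fin n), ‖x‖ ≤ R → ‖y‖ ≤ R →
      Integrable (fun ω => ⨆ s : Set.Icc t T, ‖X x ω (s : ℝ) - X y ω (s : ℝ)‖ ^ 2) μ)
    (hstab : ∀ x y : EuclideanSpace ℝ (Fin n), ‖x‖ ≤ R → ‖y‖ ≤ R →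
      (∫ ω, (⨆ s : Set.Icc t T, ‖X x ω (s : ℝ) - X y ω (s : ℝ)‖ ^ 2) ∂μ)
        ≤ C_R * ‖x - y‖ ^ 2) :
    ∀ x y : EuclideanSpace ℝ (Fin n), ‖x‖ ≤ R → ‖y‖ ≤ R →
      |feynmanKac μ X t T φ c f x - feynmanKac μ X t T φ c f y|
        ≤ Real.exp ((T - t) * Mc) * C_R ^ (lam / 2)
            * (Kφ + Mφ * Kc * (T - t) + Kf * (T - t) + Mf * Kc * (T - t) ^ 2 / 2)
            * ‖x - y‖ ^ lam := by
  intro x y hx hy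
  have hcφ := fk_cont φ Kφ lam hlam hφH
  have hcc := fk_cont c Kc lam hlam hcH
  have hcf := fk_cont f Kf lam hlam hfH
  have hK : ∀ (g : EuclideanSpace ℝ (Fin n) → ℝ) (K : ℝ),
      (∀ z w, |g z - g w| ≤ K * ‖z - w‖ ^ lam) → 0 ≤ K := by
    intro g K hg
    have h := (abs_nonneg _).trans (hg (EuclideanSpace.single ⟨0, hn⟩ 1) 0)
    simpa using h
  have hKφ := hK φ Kφ hφH
  have hKc := hK c Kc hcH
  have hKf := hK f Kf hfH
  have hMφ : 0 ≤ Mφ := (abs_nonneg _).trans (hφb 0)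
  have hMf : 0 ≤ Mf := (abs_nonneg _).trans (hfb 0)
  have mc : ∀ x, Measurable (Function.uncurry fun ω s => c (X x ω s)) := fun x =>
    hcc.measurable.comp (hXmeas x)
  have mf : ∀ x, Measurable (Function.uncurry fun ω s => f (X x ω s)) := fun x =>
    hcf.measurable.comp (hXmeas x)
  have mI : ∀ x, Measurable (Function.uncurry fun ω s => ∫ r in t..s, c (X x ω r)) := fun x =>
    fk_meas_s12 _ (mc x) Mc (fun _ _ => hcb _) t
  have mG : ∀ x, Measurable (Function.uncurry fun ω s =>
      f (X x ω s) * Real.exp (∫ r in t..s, c (X x ω r))) := fun x =>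
    (mf x).mul (mI x).exp
  have iG : ∀ x ω, IntervalIntegrable
      (fun s => f (X x ω s) * Real.exp (∫ r in t..s, c (X x ω r))) volume t T := by
    intro x ω
    refine (intervalIntegrable_const (c := Mf * Real.exp ((T - t) * Mc))).mono_fun
      ((mG x).comp measurable_prodMk_left).aestronglyMeasurable ?_
    refine (ae_restrict_iff' measurableSet_uIoc).2 (Eventually.of_forall fun s hs => ?_)
    rw [Set.uIoc_of_le htT.le] at hs
    simp only [Real.norm_eq_abs]
    exact (fk_bound_s12 Mc Mf t T s (fun r => c (X x ω r)) _ (fun _ => hcb _) (hfb _)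
      hs.1.le hs.2).trans (le_abs_self _)
  have iA : ∀ x, Integrable
      (fun ω => φ (X x ω T) * Real.exp (∫ s in t..T, c (X x ω s))) μ := by
    intro x
    refine Integrable.of_bound (C := Mφ * Real.exp ((T - t) * Mc)) ?_
      (Eventually.of_forall fun ω => ?_)
    · have h1 : Measurable fun ω => φ (X x ω T) :=
        hcφ.measurable.comp ((hXmeas x).comp measurable_prodMk_right)
      have h2 : Measurable fun ω => ∫ s in t..T, c (X x ω s) :=
        (mI x).comp measurable_prodMk_right
      exact (h1.mul h2.exp).aestronglyMeasurable
    · exact fk_bound_s12 Mc Mφ t T T (fun r => c (X x ω r)) _ (fun _ => hcb _) (hφb _)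
        htT.le le_rfl
  have iB : ∀ x, Integrable
      (fun ω => ∫ s in t..T, f (X x ω s) * Real.exp (∫ r in t..s, c (X x ω r))) μ := by
    intro x
    refine Integrable.of_bound (C := Mf * Real.exp ((T - t) * Mc) * |T - t|) ?_
      (Eventually.of_forall fun ω => ?_)
    · simp only [intervalIntegral.integral_of_le htT.le]
      exact (StronglyMeasurable.integral_prod_right (f := fun ω s =>
        f (X x ω s) * Real.exp (∫ r in t..s, c (X x ω r)))
        (mG x).stronglyMeasurable).aestronglyMeasurable
    · refine intervalIntegral.norm_integral_le_of_norm_le_const fun s hs => ?_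
      rw [Set.uIoc_of_le htT.le] at hs
      exact fk_bound_s12 Mc Mf t T s (fun r => c (X x ω r)) _ (fun _ => hcb _) (hfb _) hs.1.le hs.2
  set S : Ω → ℝ := fun ω => ⨆ s : Set.Icc t T, ‖X x ω (s : ℝ) - X y ω (s : ℝ)‖ ^ 2 with hSdef
  have hS0 : ∀ ω, 0 ≤ S ω := fun ω => Real.iSup_nonneg fun s => by positivity
  have hSle : ∀ ω, ∀ s ∈ Set.Icc t T, ‖X x ω s - X y ω s‖ ^ 2 ≤ S ω := by
    intro ω s hs
    have hbdd : BddAbove (Set.range fun s : Set.Icc t T =>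
        ‖X x ω (s : ℝ) - X y ω (s : ℝ)‖ ^ 2) := by
      have hc1 : ContinuousOn (fun s => ‖X x ω s - X y ω s‖ ^ 2) (Set.Icc t T) :=
        ((hXcont x ω).sub (hXcont y ω)).norm.pow 2
      have := (isCompact_Icc.image_of_continuousOn hc1).bddAbove
      rwa [Set.image_eq_range] at this
    exact le_ciSup hbdd ⟨s, hs⟩
  set D : Ω → ℝ := fun ω => S ω ^ (lam / 2) with hD
  have hDle : ∀ ω, ∀ s ∈ Set.Icc t T, ‖X x ω s - X y ω s‖ ^ lam ≤ D ω := by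
    intro ω s hs
    have h1 := Real.rpow_le_rpow (by positivity) (hSle ω s hs) (by linarith : 0 ≤ lam / 2)
    rwa [← Real.rpow_natCast, ← Real.rpow_mul (norm_nonneg _),
      show ((2 : ℕ) : ℝ) * (lam / 2) = lam by push_cast; ring] at h1
  obtain ⟨hDi, hDj⟩ := fk_jensen μ S (hint x y hx hy) hS0 (lam / 2) (by linarith) (by linarith)
  have hED : ∫ ω, D ω ∂μ ≤ C_R ^ (lam / 2) * ‖x - y‖ ^ lam := by
    refine hDj.trans ?_
    have h1 := Real.rpow_le_rpow (integral_nonneg hS0) (hstab x y hx hy)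
      (by linarith : 0 ≤ lam / 2)
    rwa [Real.mul_rpow hCR.le (by positivity), ← Real.rpow_natCast ‖x - y‖,
      ← Real.rpow_mul (norm_nonneg _),
      show ((2 : ℕ) : ℝ) * (lam / 2) = lam by push_cast; ring] at h1
  have hcD : ∀ ω, ∀ r ∈ Set.Icc t T, |c (X x ω r) - c (X y ω r)| ≤ Kc * D ω := fun ω r hr =>
    (hcH _ _).trans (mul_le_mul_of_nonneg_left (hDle ω r hr) hKc)
  have hfD : ∀ ω, ∀ r ∈ Set.Icc t T, |f (X x ω r) - f (X y ω r)| ≤ Kf * D ω := fun ω r hr =>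
    (hfH _ _).trans (mul_le_mul_of_nonneg_left (hDle ω r hr) hKf)
  have mcω : ∀ x ω, Measurable fun r => c (X x ω r) := fun x ω =>
    (mc x).comp measurable_prodMk_left
  set Γ : ℝ := Real.exp ((T - t) * Mc)
    * (Kφ + Mφ * Kc * (T - t) + Kf * (T - t) + Mf * Kc * (T - t) ^ 2 / 2) with hΓ
  have hΓ0 : 0 ≤ Γ := by
    have : 0 ≤ T - t := by linarith
    positivity
  have hpath : ∀ ω,
      ‖(φ (X x ω T) * Real.exp (∫ s in t..T, c (X x ω s))
        - ∫ s in t..T, f (X x ω s) * Real.exp (∫ r in t..s, c (X x ω r)))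
      - (φ (X y ω T) * Real.exp (∫ s in t..T, c (X y ω s))
        - ∫ s in t..T, f (X y ω s) * Real.exp (∫ r in t..s, c (X y ω r)))‖ ≤ Γ * D ω := by
    intro ω
    have hT : T ∈ Set.Icc t T := ⟨htT.le, le_rfl⟩
    have h1 := fk_path (fun r => c (X x ω r)) (fun r => c (X y ω r)) Mc (Kc * D ω) t T T
      (φ (X x ω T)) (φ (X y ω T)) (Kφ * D ω) Mφ (mcω x ω) (mcω y ω) (fun _ => hcb _)
      (fun _ => hcb _) (hcD ω) htT.le le_rfl
      ((hφH _ _).trans (mul_le_mul_of_nonneg_left (hDle ω T hT) hKφ)) (hφb _)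
    have h2 := fk_path_int (fun r => c (X x ω r)) (fun r => c (X y ω r))
      (fun r => f (X x ω r)) (fun r => f (X y ω r)) Mc (Kc * D ω) t T
      (Kf * D ω) Mf (mcω x ω) (mcω y ω) (fun _ => hcb _)
      (fun _ => hcb _) (hcD ω) htT.le (hfD ω) (fun _ => hfb _) (iG x ω) (iG y ω)
    rw [sub_sub_sub_comm, Real.norm_eq_abs]
    refine (abs_sub _ _).trans ((add_le_add h1 h2).trans (le_of_eq ?_))
    rw [hΓ]; ring
  unfold feynmanKac
  rw [← integral_sub (iA x) (iB x), ← integral_sub (iA y) (iB y),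
    ← integral_sub (by exact (iA x).sub (iB x)) (by exact (iA y).sub (iB y)),
    ← Real.norm_eq_abs]
  refine (norm_integral_le_of_norm_le (hDi.const_mul Γ) (Eventually.of_forall hpath)).trans ?_
  rw [integral_const_mul]
  refine (mul_le_mul_of_nonneg_left hED hΓ0).trans (le_of_eq ?_)
  rw [hΓ]; ring
end
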